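/- A feasible anonymous linear Groves mechanism in a multi-unit auction with unit demand is undominated only if its total payment function, written as C_0 + C_1[θ]_1 + ... + C_n[θ]_n, vanishes identically on one of the following regions: (a) {θ : [θ]_1 = U}, (b) {θ : [θ]_k = [θ]_{k+1}} for some k ∈ {1,...,n−1}, or (c) {θ : [θ]_n = L}. -/

import Mathlib

/-- The `k`-th highest element (1-indexed) of a multiset of reals. -/
noncomputable def kthHighest (m : Multiset ℝ) (k : ℕ) : ℝ :=
  (m.sort (· ≤ ·)).getD (Multiset.card m - k) 0

/-- The multiset of all bids. -/
def allBids {n : ℕ} (θ : Fin n → ℝ) : Multiset ℝ :=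
  (Finset.univ.val : Multiset (Fin n)).map θ

/-- The multiset of bids of players other than `i`. -/
def otherBids {n : ℕ} (θ : Fin n → ℝ) (i : Fin n) : Multiset ℝ :=
  ((Finset.univ.erase i).val : Multiset (Fin n)).map θ

/-- Total payment of the Groves mechanism given (player-wise) by
`h' : Fin n → Multiset ℝ → ℝ`. -/
noncomputable def totalPay {n : ℕ} (m : ℕ) (h' : Fin n → Multiset ℝ → ℝ)
    (θ : Fin n → ℝ) : ℝ :=
  -(m : ℝ) * kthHighest (allBids θ) (m + 1) + ∑ i, h' i (otherBids θ i)

/-- The mechanism given by `h` is dominated by some feasible Groves mechanism. -/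
def DominatedMech (n m : ℕ) (L U : ℝ) (h : Multiset ℝ → ℝ) : Prop :=
  ∃ h' : Fin n → Multiset ℝ → ℝ,
    (∀ θ : Fin n → ℝ, (∀ i, θ i ∈ Set.Icc L U) → totalPay m h' θ ≤ 0) ∧
    (∀ θ : Fin n → ℝ, (∀ i, θ i ∈ Set.Icc L U) → ∀ i : Fin n,
      h (otherBids θ i) ≤ h' i (otherBids θ i)) ∧
    (∃ θ : Fin n → ℝ, (∀ i, θ i ∈ Set.Icc L U) ∧ ∃ i : Fin n,
      h (otherBids θ i) < h' i (otherBids θ i))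

/-!
With the bids of the others fixed, the total payment is convex in the remaining bid between any two
consecutive bids of the others, so it is largest when that bid equals one of theirs or an endpoint
of `[L, U]`, that is, on one of the regions `[θ]_k = [θ]_{k+1}`, where `[θ]_0 = U` and
`[θ]_{n+1} = L`. If every region contained a profile with negative total payment, then averaging the
bids of the others over these profiles would, by convexity, give one profile of the others for which
the total payment is bounded away from `0` whatever the remaining bid; handing that slack to the
remaining bidder gives a dominating mechanism.
-/

open Set

section ConvexFamilies

variable {ι 𝕜 E : Type*} [Field 𝕜] [LinearOrder 𝕜] [IsStrictOrderedRing 𝕜] [AddCommGroup E]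
  [Module 𝕜 E]

lemma exists_forall_neg_of_convexOn [Finite ι] [Nonempty ι] {s : Set E} {f : ι → E → 𝕜}
    (hconv : ∀ i, ConvexOn 𝕜 s (f i)) (hle : ∀ i, ∀ x ∈ s, f i x ≤ 0)
    (hlt : ∀ i, ∃ x ∈ s, f i x < 0) : ∃ x ∈ s, ∀ i, f i x < 0 := by
  have := Fintype.ofFinite ι
  choose x hxs hneg using hlt
  have hpos : (0 : 𝕜) < (Fintype.card ι : 𝕜)⁻¹ := by positivity
  have hsum : ∑ _i : ι, (Fintype.card ι : 𝕜)⁻¹ = 1 := by simp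
  refine ⟨∑ j, (Fintype.card ι : 𝕜)⁻¹ • x j,
    (hconv (Classical.arbitrary ι)).1.sum_mem (fun _ _ => hpos.le) hsum fun j _ => hxs j,
    fun i => ?_⟩
  calc f i (∑ j, (Fintype.card ι : 𝕜)⁻¹ • x j)
      ≤ ∑ j, (Fintype.card ι : 𝕜)⁻¹ • f i (x j) :=
        (hconv i).map_sum_le (fun _ _ => hpos.le) hsum fun j _ => hxs j
    _ < 0 := Finset.sum_neg'
        (fun j _ => mul_nonpos_of_nonneg_of_nonpos hpos.le (hle i _ (hxs j)))
        ⟨i, Finset.mem_univ i, mul_neg_of_pos_of_neg hpos (hneg i)⟩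

end ConvexFamilies

lemma exists_mem_Icc_succ_castSucc {α : Type*} [LinearOrder α] {n : ℕ} {e : Fin (n + 2) → α}
    {x : α} (hx : x ∈ Icc (e (Fin.last (n + 1))) (e 0)) :
    ∃ p : Fin (n + 1), x ∈ Icc (e p.succ) (e p.castSucc) := by
  by_contra! hgap
  have hstep (p : Fin (n + 1)) (hp : x ≤ e p.castSucc) : x < e p.succ :=
    lt_of_not_ge fun hlt => hgap p ⟨hlt, hp⟩
  have hbelow (i : Fin (n + 2)) : x ≤ e i :=
    Fin.induction hx.2 (fun p hp => (hstep p hp).le) i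
  exact (hstep (Fin.last n) (hbelow _)).not_ge hx.1

section Bids

variable {n : ℕ}

lemma allBids_insertNth (i : Fin (n + 1)) (x : ℝ) (y : Fin n → ℝ) :
    allBids (i.insertNth x y : Fin (n + 1) → ℝ) = x ::ₘ allBids y := by
  simp [allBids, Fin.univ_succAbove n i, Function.comp_def]

lemma allBids_eq_cons_otherBids (θ : Fin n → ℝ) (i : Fin n) :
    allBids θ = θ i ::ₘ otherBids θ i := by
  rw [allBids, otherBids, ← Multiset.map_cons, Finset.erase_val,
    Multiset.cons_erase (Finset.mem_univ i)]

lemma otherBids_eq_erase (θ : Fin n → ℝ) (i : Fin n) :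
    otherBids θ i = (allBids θ).erase (θ i) := by
  rw [allBids_eq_cons_otherBids θ i, Multiset.erase_cons_head]

lemma otherBids_eq_allBids_removeNth (θ : Fin (n + 1) → ℝ) (i : Fin (n + 1)) :
    otherBids θ i = allBids (i.removeNth θ) := by
  rw [← Multiset.cons_inj_right (θ i), ← allBids_eq_cons_otherBids, ← allBids_insertNth i,
    Fin.insertNth_self_removeNth]

lemma allBids_comp_perm (θ : Fin n → ℝ) (σ : Equiv.Perm (Fin n)) :
    allBids (θ ∘ σ) = allBids θ := by
  rw [allBids, ← Multiset.map_map, Multiset.map_univ_val_equiv, allBids]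

lemma exists_perm_antitone_comp {α : Type*} [LinearOrder α] (θ : Fin n → α) :
    ∃ σ : Equiv.Perm (Fin n), Antitone (θ ∘ σ) :=
  ⟨Tuple.sort (OrderDual.toDual ∘ θ), Tuple.monotone_sort (OrderDual.toDual ∘ θ)⟩

lemma kthHighest_allBids {θ : Fin n → ℝ} (hθ : Antitone θ) (i : Fin n) :
    kthHighest (allBids θ) (i + 1) = θ i := by
  have hsort : (allBids θ).sort (· ≤ ·) = (List.ofFn θ).reverse := by
    refine List.Perm.eq_of_pairwise' (r := (· ≤ ·)) (Multiset.pairwise_sort _ _) ?_ ?_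
    · exact List.pairwise_reverse.2 hθ.sortedGE_ofFn.pairwise
    · rw [← Multiset.coe_eq_coe, Multiset.sort_eq, Multiset.coe_reverse, allBids,
        Fin.univ_val_map]
  have hcard : (allBids θ).card = n := by simp [allBids]
  rw [kthHighest, hsort, hcard, List.getD_eq_getElem _ _ (by simp [i.pos])]
  simp only [List.getElem_reverse, List.getElem_ofFn, List.length_ofFn]
  congr 1
  ext
  simp only
  omega

lemma totalPay_congr_allBids {m : ℕ} (h : Multiset ℝ → ℝ) {θ θ' : Fin n → ℝ}
    (hθ : allBids θ = allBids θ') :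
    totalPay m (fun _ => h) θ = totalPay m (fun _ => h) θ' := by
  have hsum (η : Fin n → ℝ) :
      ∑ i, h (otherBids η i) = ((allBids η).map fun x => h ((allBids η).erase x)).sum := by
    simp only [otherBids_eq_erase, Finset.sum_eq_multiset_sum]
    exact congrArg Multiset.sum (Multiset.map_map (fun x => h ((allBids η).erase x)) η _).symm
  rw [totalPay, totalPay, hsum, hsum, hθ]

end Bids

/-- The bid profiles with values in `[L, U]`, listed in decreasing order. -/
def sortedBids (n : ℕ) (L U : ℝ) : Set (Fin n → ℝ) :=
  {θ | Antitone θ ∧ ∀ i, θ i ∈ Icc L U}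

lemma convex_setOf_antitone {ι : Type*} [Preorder ι] : Convex ℝ {θ : ι → ℝ | Antitone θ} := by
  intro θ hθ η hη a b ha hb _ i j hij
  exact add_le_add (mul_le_mul_of_nonneg_left (hθ hij) ha) (mul_le_mul_of_nonneg_left (hη hij) hb)

lemma convex_sortedBids (n : ℕ) (L U : ℝ) : Convex ℝ (sortedBids n L U) := by
  have hbox : Convex ℝ {θ : Fin n → ℝ | ∀ i, θ i ∈ Icc L U} := by
    simpa [Set.pi] using convex_pi (s := univ) fun (_ : Fin n) _ => convex_Icc (𝕜 := ℝ) L U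
  exact convex_setOf_antitone.inter hbox

section LinearMechanism

variable {n m : ℕ}

lemma sum_mul_kthHighest_allBids {y : Fin n → ℝ} (hy : Antitone y) (a : ℕ → ℝ) :
    ∑ j ∈ Finset.Icc 1 n, a j * kthHighest (allBids y) j = ∑ j : Fin n, a (j + 1) * y j := by
  simp only [← kthHighest_allBids hy]
  rw [Fin.sum_univ_eq_sum_range fun j => a (j + 1) * kthHighest (allBids y) (j + 1),
    Finset.range_eq_Ico, Finset.sum_Ico_add' (fun j => a j * kthHighest (allBids y) j) 0 n 1]
  rfl

lemma exists_totalPay_eq_add_linearMap (hmn : m < n) (a : ℕ → ℝ) (h : Multiset ℝ → ℝ)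
    (hh : ∀ s, h s = a 0 + ∑ j ∈ Finset.Icc 1 (n - 1), a j * kthHighest s j) :
    ∃ (c : ℝ) (C : (Fin n → ℝ) →ₗ[ℝ] ℝ),
      ∀ θ, Antitone θ → totalPay m (fun _ => h) θ = c + C θ := by
  obtain ⟨N, rfl⟩ := Nat.exists_eq_add_one_of_ne_zero (Nat.ne_zero_of_lt hmn)
  refine ⟨(N + 1) * a 0, -(m : ℝ) • LinearMap.proj ⟨m, hmn⟩ +
    ∑ i : Fin (N + 1), ∑ j : Fin N, a (j + 1) • LinearMap.proj (i.succAbove j), fun θ hθ => ?_⟩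
  have hothers (i : Fin (N + 1)) :
      h (otherBids θ i) = a 0 + ∑ j : Fin N, a (j + 1) * θ (i.succAbove j) := by
    have hanti : Antitone (i.removeNth θ) :=
      hθ.comp_monotone (Fin.strictMono_succAbove i).monotone
    rw [hh, otherBids_eq_allBids_removeNth, Nat.add_sub_cancel, sum_mul_kthHighest_allBids hanti]
    rfl
  rw [totalPay, show kthHighest (allBids θ) (m + 1) = _ from kthHighest_allBids hθ ⟨m, hmn⟩,
    Finset.sum_congr rfl fun i _ => hothers i, Finset.sum_add_distrib]
  simp only [neg_mul, Finset.sum_const, Finset.card_univ, Fintype.card_fin, nsmul_eq_mul,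
    Nat.cast_add, Nat.cast_one, LinearMap.add_apply, LinearMap.smul_apply, LinearMap.coe_proj,
    Function.eval, smul_eq_mul, LinearMap.sum_apply]
  ring

lemma convexOn_totalPay_of_linear (hmn : m < n) (L U : ℝ) (a : ℕ → ℝ) (h : Multiset ℝ → ℝ)
    (hh : ∀ s, h s = a 0 + ∑ j ∈ Finset.Icc 1 (n - 1), a j * kthHighest s j) :
    ConvexOn ℝ (sortedBids n L U) (totalPay m fun _ => h) := by
  obtain ⟨c, C, hC⟩ := exists_totalPay_eq_add_linearMap hmn a h hh
  have hconv := C.convexOn (convex_sortedBids n L U)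
  exact ((convexOn_const c hconv.1).add hconv).congr fun θ hθ => (hC θ hθ.1).symm

end LinearMechanism

section Ladders

/-- Bid ladders `U = e₀ ≥ e₁ ≥ ⋯ ≥ e_{N+1} = L`: the sorted bids of `N` bidders, with the two
extreme bids added at the ends. -/
def bidLadders (N : ℕ) (L U : ℝ) : Set (Fin (N + 2) → ℝ) :=
  {e | Antitone e ∧ e 0 = U ∧ e (Fin.last (N + 1)) = L}

/-- The bids of a ladder without the two extreme bids at its ends. -/
def innerBids {N : ℕ} (e : Fin (N + 2) → ℝ) : Fin N → ℝ :=
  fun j => e j.succ.castSucc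

/-- The relabelling that drops both ends of a ladder and repeats rung `k`: `e ∘ repeatRung k` lists
`e_k` together with `e_1, …, e_N` in decreasing order. -/
def repeatRung {N : ℕ} (k : Fin (N + 2)) (i : Fin (N + 1)) : Fin (N + 2) :=
  if i.castSucc < k then i.succ else i.castSucc

/-- The sorted profile `s` as a ladder, so that `[s]_0 = U` and `[s]_{n+1} = L`. -/
def padBids {n : ℕ} (L U : ℝ) (s : Fin n → ℝ) : Fin (n + 2) → ℝ :=
  Fin.cons U (Fin.snoc s L : Fin (n + 1) → ℝ)

variable {N : ℕ} {L U : ℝ}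

lemma monotone_repeatRung (k : Fin (N + 2)) : Monotone (repeatRung k) := by
  intro i j hij
  simp only [repeatRung, Fin.lt_def, Fin.le_def] at hij ⊢
  split_ifs <;> simp only [Fin.val_succ, Fin.val_castSucc] at * <;> omega

lemma convex_bidLadders : Convex ℝ (bidLadders N L U) := by
  have hends : Convex ℝ {e : Fin (N + 2) → ℝ | e 0 = U ∧ e (Fin.last (N + 1)) = L} := by
    rintro e ⟨he₀, he₁⟩ e' ⟨he₀', he₁'⟩ a b - - hab
    simp [he₀, he₁, he₀', he₁', ← add_mul, hab]
  exact convex_setOf_antitone.inter hends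

lemma mem_Icc_of_mem_bidLadders {e : Fin (N + 2) → ℝ} (he : e ∈ bidLadders N L U)
    (i : Fin (N + 2)) : e i ∈ Icc L U := by
  obtain ⟨hanti, rfl, rfl⟩ := he
  exact ⟨hanti (Fin.le_last i), hanti (Fin.zero_le i)⟩

lemma comp_repeatRung_mem_sortedBids {e : Fin (N + 2) → ℝ} (he : e ∈ bidLadders N L U)
    (k : Fin (N + 2)) : e ∘ repeatRung k ∈ sortedBids (N + 1) L U :=
  ⟨he.1.comp_monotone (monotone_repeatRung k), fun _ => mem_Icc_of_mem_bidLadders he _⟩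

lemma comp_repeatRung_castSucc (e : Fin (N + 2) → ℝ) (p : Fin (N + 1)) :
    e ∘ repeatRung p.castSucc = p.insertNth (e p.castSucc) (innerBids e) := by
  refine Fin.eq_insertNth_iff.2 ⟨by simp [repeatRung], funext fun j => congrArg e (Fin.ext ?_)⟩
  simp only [repeatRung, Fin.succAbove, Fin.lt_def]
  split_ifs <;> simp only [Fin.val_succ, Fin.val_castSucc] at * <;> omega

lemma comp_repeatRung_succ (e : Fin (N + 2) → ℝ) (p : Fin (N + 1)) :
    e ∘ repeatRung p.succ = p.insertNth (e p.succ) (innerBids e) := by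
  refine Fin.eq_insertNth_iff.2 ⟨by simp [repeatRung], funext fun j => congrArg e (Fin.ext ?_)⟩
  simp only [repeatRung, Fin.succAbove, Fin.lt_def]
  split_ifs <;> simp only [Fin.val_succ, Fin.val_castSucc] at * <;> omega

lemma padBids_zero (s : Fin N → ℝ) : padBids L U s 0 = U := rfl

lemma padBids_last (s : Fin N → ℝ) : padBids L U s (Fin.last (N + 1)) = L := by
  rw [padBids, ← Fin.succ_last, Fin.cons_succ, Fin.snoc_last]

lemma padBids_succ_castSucc (s : Fin N → ℝ) (j : Fin N) : padBids L U s j.succ.castSucc = s j := by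
  rw [padBids, ← Fin.succ_castSucc, Fin.cons_succ, Fin.snoc_castSucc]

lemma padBids_mem_bidLadders {s : Fin (N + 1) → ℝ} (hs : s ∈ sortedBids (N + 1) L U) :
    padBids L U s ∈ bidLadders (N + 1) L U := by
  refine ⟨Fin.antitone_iff_succ_le.2 fun i => ?_, padBids_zero s, padBids_last s⟩
  induction i using Fin.cases with
  | zero => exact (padBids_succ_castSucc s 0).trans_le (hs.2 0).2
  | succ i =>
    rw [padBids_succ_castSucc]
    induction i using Fin.lastCases with
    | last => exact (padBids_last s).trans_le (hs.2 (Fin.last N)).1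
    | cast j =>
      rw [Fin.succ_castSucc, Fin.succ_castSucc, padBids_succ_castSucc]
      exact hs.1 Fin.castSucc_lt_succ.le

lemma innerBids_padBids (s : Fin N → ℝ) : innerBids (padBids L U s) = s :=
  funext (padBids_succ_castSucc s)

lemma comp_succAbove_mem_bidLadders {e : Fin (N + 3) → ℝ} (he : e ∈ bidLadders (N + 1) L U)
    {k : Fin (N + 2)} (hk : e k.castSucc = e k.succ) :
    e ∘ k.castSucc.succAbove ∈ bidLadders N L U := by
  obtain ⟨hanti, h0, hlast⟩ := he
  refine ⟨hanti.comp_monotone (Fin.strictMono_succAbove _).monotone, ?_, ?_⟩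
  · rcases eq_or_ne k 0 with rfl | hk0
    · simpa using hk.symm.trans h0
    · simpa [Fin.succAbove_ne_zero_zero (Fin.castSucc_ne_zero_iff.2 hk0)] using h0
  · simpa [Fin.succAbove_ne_last_last (Fin.castSucc_lt_last k).ne] using hlast

lemma comp_succAbove_comp_repeatRung {e : Fin (N + 3) → ℝ} {k : Fin (N + 2)}
    (hk : e k.castSucc = e k.succ) :
    (e ∘ k.castSucc.succAbove) ∘ repeatRung k = innerBids e := by
  ext i
  simp only [Function.comp_apply, innerBids, repeatRung, Fin.castSucc_lt_iff_succ_le]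
  rcases lt_trichotomy i.succ k with hlt | rfl | hgt
  · rw [if_pos hlt.le, Fin.succAbove_castSucc_of_lt _ _ hlt]
  · rw [if_pos le_rfl, Fin.succAbove_castSucc_self, ← hk]
  · rw [if_neg hgt.not_ge, Fin.succAbove_castSucc_of_le _ _ (Fin.le_castSucc_iff.2 hgt),
      Fin.succ_castSucc]

lemma exists_bidLadders_comp_repeatRung_eq {s : Fin (N + 1) → ℝ}
    (hs : s ∈ sortedBids (N + 1) L U) {k : Fin (N + 2)}
    (hk : padBids L U s k.castSucc = padBids L U s k.succ) :
    ∃ e ∈ bidLadders N L U, e ∘ repeatRung k = s :=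
  ⟨_, comp_succAbove_mem_bidLadders (padBids_mem_bidLadders hs) hk,
    (comp_succAbove_comp_repeatRung hk).trans (innerBids_padBids s)⟩

lemma insertNth_mem_segment_comp_repeatRung {e : Fin (N + 2) → ℝ} {p : Fin (N + 1)} {x : ℝ}
    (hx : x ∈ Icc (e p.succ) (e p.castSucc)) :
    (p.insertNth x (innerBids e) : Fin (N + 1) → ℝ) ∈
      segment ℝ (e ∘ repeatRung p.succ) (e ∘ repeatRung p.castSucc) := by
  rw [comp_repeatRung_castSucc, comp_repeatRung_succ]
  have := Pi.image_update_segment (𝕜 := ℝ) p (e p.succ) (e p.castSucc)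
    (p.insertNth x (innerBids e) : Fin (N + 1) → ℝ)
  simp only [Fin.update_insertNth] at this
  rw [← this, segment_eq_Icc (hx.1.trans hx.2)]
  exact ⟨x, hx, by simp⟩

end Ladders

section Domination

variable {N m : ℕ} {L U : ℝ} {h : Multiset ℝ → ℝ}

lemma dominatedMech_of_forall_totalPay_le
    (hfeas : ∀ θ : Fin (N + 1) → ℝ, (∀ i, θ i ∈ Icc L U) → totalPay m (fun _ => h) θ ≤ 0)
    (hLU : L ≤ U) {y : Fin N → ℝ} (hy : ∀ j, y j ∈ Icc L U) (i₀ : Fin (N + 1)) {ε : ℝ} (hε : 0 < ε)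
    (hle : ∀ x ∈ Icc L U, totalPay m (fun _ => h) (i₀.insertNth x y) ≤ -ε) :
    DominatedMech (N + 1) m L U h := by
  classical
  let h' (i : Fin (N + 1)) (s : Multiset ℝ) : ℝ := h s + if i = i₀ ∧ s = allBids y then ε else 0
  have hpay (θ : Fin (N + 1) → ℝ) : totalPay m h' θ =
      totalPay m (fun _ => h) θ + if otherBids θ i₀ = allBids y then ε else 0 := by
    simp [h', totalPay, Finset.sum_add_distrib, ite_and, add_assoc]
  refine ⟨h', fun θ hθ => ?_, fun θ _ i => ?_, i₀.insertNth L y, ?_, i₀, ?_⟩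
  · rw [hpay]
    split_ifs with hother
    · have hbids : allBids θ = allBids (i₀.insertNth (θ i₀) y : Fin (N + 1) → ℝ) := by
        rw [allBids_insertNth, ← hother, ← allBids_eq_cons_otherBids]
      rw [totalPay_congr_allBids h hbids]
      linarith [hle (θ i₀) (hθ i₀)]
    · simpa using hfeas θ hθ
  · refine le_add_of_nonneg_right ?_
    split_ifs <;> simp [hε.le]
  · exact (Fin.forall_iff_succAbove i₀).2 (by simpa using ⟨hLU, hy⟩)
  · have hother : otherBids (i₀.insertNth L y : Fin (N + 1) → ℝ) i₀ = allBids y := by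
      rw [otherBids_eq_allBids_removeNth, Fin.removeNth_insertNth]
    simpa [h', hother] using hε

lemma totalPay_insertNth_le_of_forall_repeatRung
    (hconv : ConvexOn ℝ (sortedBids (N + 1) L U) (totalPay m fun _ => h))
    {e : Fin (N + 2) → ℝ} (he : e ∈ bidLadders N L U) {c : ℝ}
    (hle : ∀ k, totalPay m (fun _ => h) (e ∘ repeatRung k) ≤ c)
    {x : ℝ} (hx : x ∈ Icc L U) (i : Fin (N + 1)) :
    totalPay m (fun _ => h) (i.insertNth x (innerBids e)) ≤ c := by
  obtain ⟨p, hp⟩ : ∃ p : Fin (N + 1), x ∈ Icc (e p.succ) (e p.castSucc) :=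
    exists_mem_Icc_succ_castSucc (by rwa [he.2.1, he.2.2])
  calc totalPay m (fun _ => h) (i.insertNth x (innerBids e))
      = totalPay m (fun _ => h) (p.insertNth x (innerBids e)) :=
        totalPay_congr_allBids h (by simp only [allBids_insertNth])
    _ ≤ max (totalPay m (fun _ => h) (e ∘ repeatRung p.succ))
          (totalPay m (fun _ => h) (e ∘ repeatRung p.castSucc)) :=
        hconv.le_max_of_mem_segment (comp_repeatRung_mem_sortedBids he _)
          (comp_repeatRung_mem_sortedBids he _) (insertNth_mem_segment_comp_repeatRung hp)
    _ ≤ c := max_le (hle _) (hle _)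

lemma exists_forall_totalPay_comp_repeatRung_eq_zero
    (hconv : ConvexOn ℝ (sortedBids (N + 1) L U) (totalPay m fun _ => h))
    (hfeas : ∀ θ : Fin (N + 1) → ℝ, (∀ i, θ i ∈ Icc L U) → totalPay m (fun _ => h) θ ≤ 0)
    (hundom : ¬ DominatedMech (N + 1) m L U h) :
    ∃ k, ∀ e ∈ bidLadders N L U, totalPay m (fun _ => h) (e ∘ repeatRung k) = 0 := by
  by_contra! hne
  have hnonpos (k : Fin (N + 2)) (e) (he : e ∈ bidLadders N L U) :
      totalPay m (fun _ => h) (e ∘ repeatRung k) ≤ 0 :=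
    hfeas _ (comp_repeatRung_mem_sortedBids he k).2
  have hconv_rung (k : Fin (N + 2)) :
      ConvexOn ℝ (bidLadders N L U) fun e => totalPay m (fun _ => h) (e ∘ repeatRung k) :=
    (hconv.comp_linearMap (LinearMap.funLeft ℝ ℝ (repeatRung k))).subset
      (fun _ he => comp_repeatRung_mem_sortedBids he k) convex_bidLadders
  obtain ⟨e, he, hneg⟩ := exists_forall_neg_of_convexOn hconv_rung hnonpos fun k =>
    (hne k).imp fun e he => ⟨he.1, (hnonpos k e he.1).lt_of_ne he.2⟩
  obtain ⟨k₀, hmax⟩ := Finite.exists_max fun k => totalPay m (fun _ => h) (e ∘ repeatRung k)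
  have hLU : L ≤ U := nonempty_Icc.1 ⟨_, mem_Icc_of_mem_bidLadders he 0⟩
  exact hundom <| dominatedMech_of_forall_totalPay_le hfeas hLU
    (y := innerBids e) (fun j => mem_Icc_of_mem_bidLadders he j.succ.castSucc) 0
    (neg_pos.2 (hneg k₀)) fun x hx => by
      simpa only [neg_neg] using totalPay_insertNth_le_of_forall_repeatRung hconv he hmax hx 0

lemma totalPay_eq_zero_of_padBids_eq {k : Fin (N + 2)}
    (hk : ∀ e ∈ bidLadders N L U, totalPay m (fun _ => h) (e ∘ repeatRung k) = 0)
    {θ : Fin (N + 1) → ℝ} (hθ : ∀ i, θ i ∈ Icc L U)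
    (htie : padBids L U (fun i => kthHighest (allBids θ) (i + 1)) k.castSucc =
      padBids L U (fun i => kthHighest (allBids θ) (i + 1)) k.succ) :
    totalPay m (fun _ => h) θ = 0 := by
  obtain ⟨σ, hσ⟩ := exists_perm_antitone_comp θ
  simp only [← allBids_comp_perm θ σ, kthHighest_allBids hσ] at htie
  obtain ⟨e, he, hes⟩ := exists_bidLadders_comp_repeatRung_eq ⟨hσ, fun i => hθ (σ i)⟩ htie
  rw [← totalPay_congr_allBids h (allBids_comp_perm θ σ), ← hk e he, hes]

end Domination

theorem undominated_linear_vanishes_on_region_general {n m : ℕ} (hmn : m < n) (L U : ℝ)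
    (h : Multiset ℝ → ℝ) (hconv : ConvexOn ℝ (sortedBids n L U) (totalPay m fun _ => h))
    (hfeas : ∀ θ : Fin n → ℝ, (∀ i, θ i ∈ Icc L U) → totalPay m (fun _ => h) θ ≤ 0)
    (hundom : ¬ DominatedMech n m L U h) :
    (∀ θ : Fin n → ℝ, (∀ i, θ i ∈ Icc L U) →
      kthHighest (allBids θ) 1 = U → totalPay m (fun _ => h) θ = 0) ∨
    (∃ k ∈ Finset.Icc 1 (n - 1), ∀ θ : Fin n → ℝ, (∀ i, θ i ∈ Icc L U) →
      kthHighest (allBids θ) k = kthHighest (allBids θ) (k + 1) →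
      totalPay m (fun _ => h) θ = 0) ∨
    (∀ θ : Fin n → ℝ, (∀ i, θ i ∈ Icc L U) →
      kthHighest (allBids θ) n = L → totalPay m (fun _ => h) θ = 0) := by
  obtain ⟨N, rfl⟩ := Nat.exists_eq_add_one_of_ne_zero (Nat.ne_zero_of_lt hmn)
  obtain ⟨k, hk⟩ := exists_forall_totalPay_comp_repeatRung_eq_zero hconv hfeas hundom
  have hzero (θ : Fin (N + 1) → ℝ) (hθ : ∀ i, θ i ∈ Icc L U) :=
    totalPay_eq_zero_of_padBids_eq hk hθ
  induction k using Fin.cases with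
  | zero =>
    refine .inl fun θ hθ hU => hzero θ hθ ?_
    simpa [padBids] using hU.symm
  | succ k =>
    induction k using Fin.lastCases with
    | last =>
      refine .inr <| .inr fun θ hθ hL => hzero θ hθ ?_
      exact (padBids_succ_castSucc _ _).trans <| hL.trans (padBids_last _).symm
    | cast j =>
      refine .inr <| .inl ⟨j + 1, by simp, fun θ hθ hj => hzero θ hθ ?_⟩
      rw [padBids_succ_castSucc, Fin.succ_castSucc, Fin.succ_castSucc, padBids_succ_castSucc]
      exact hj

/-- a feasible anonymous *linear* Groves mechanism
(`h(θ_{-i}) = a_0 + ∑_{j=1}^{n−1} a_j [θ_{-i}]_j`) in a multi-unit auction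
with unit demand is undominated only if its total payment function vanishes
identically on one of the regions `{[θ]_1 = U}`, `{[θ]_k = [θ]_{k+1}}` for
some `k ∈ {1,...,n−1}`, or `{[θ]_n = L}`. -/
theorem undominated_linear_vanishes_on_region
    {n m : ℕ} (hm0 : 0 < m) (hmn : m < n) (L U : ℝ) (hLU : L < U)
    (a : ℕ → ℝ)
    (h : Multiset ℝ → ℝ)
    (hh : ∀ s : Multiset ℝ,
      h s = a 0 + ∑ j ∈ Finset.Icc 1 (n - 1), a j * kthHighest s j)
    (hfeas : ∀ θ : Fin n → ℝ, (∀ i, θ i ∈ Set.Icc L U) →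
      totalPay m (fun _ => h) θ ≤ 0)
    (hundom : ¬ DominatedMech n m L U h) :
    (∀ θ : Fin n → ℝ, (∀ i, θ i ∈ Set.Icc L U) →
      kthHighest (allBids θ) 1 = U → totalPay m (fun _ => h) θ = 0) ∨
    (∃ k ∈ Finset.Icc 1 (n - 1), ∀ θ : Fin n → ℝ, (∀ i, θ i ∈ Set.Icc L U) →
      kthHighest (allBids θ) k = kthHighest (allBids θ) (k + 1) →
      totalPay m (fun _ => h) θ = 0) ∨
    (∀ θ : Fin n → ℝ, (∀ i, θ i ∈ Set.Icc L U) →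
      kthHighest (allBids θ) n = L → totalPay m (fun _ => h) θ = 0) :=
  undominated_linear_vanishes_on_region_general hmn L U h
    (convexOn_totalPay_of_linear hmn L U a h hh) hfeas hundom
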